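/- Let ψ : 𝔻ᵏ → ℂᵏ be holomorphic and C¹-smooth on the closed polydisc, and let V ⊆ ℂᵏ be a domain such that the complex derivative d_zψ is non-degenerate (invertible) for every z in the intersection of the closure of V with the closure of 𝔻ᵏ. Let β ∈ (-1, 0]. Then there exists a constant c > 0 such that for all δ_1, …, δ_k > 0: V_β({z ∈ closure(V) ∩ closure(𝔻ᵏ) : |ψ_i(z)| < δ_i for i = 1,…,k}) ≤ c·δ_1^{2+β}·δ_2^{2+β}⋯δ_k^{2+β}. -/

import Mathlib

open MeasureTheory Metric Set ENNReal

noncomputable section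

/-- The open unit polydisc in `ℂⁿ`. -/
def polydisc (n : ℕ) : Set (Fin n → ℂ) := {z | ∀ j, ‖z j‖ < 1}

/-- The closed unit polydisc in `ℂⁿ`. -/
def closedPolydisc (n : ℕ) : Set (Fin n → ℂ) := {z | ∀ j, ‖z j‖ ≤ 1}

/-- The distinguished boundary (torus) of the polydisc. -/
def torus (n : ℕ) : Set (Fin n → ℂ) := {z | ∀ j, ‖z j‖ = 1}

/-- The weighted Bergman measure `V_β` on the polydisc: the product of the measures
`dA_β(z) = (β+1)(1-|z|²)^β dA(z)`, where `dA` is normalized area measure on the unit disc. -/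
def Vbeta (n : ℕ) (β : ℝ) : Measure (Fin n → ℂ) :=
  (volume.restrict (polydisc n)).withDensity
    (fun z => ENNReal.ofReal (∏ j, ((β + 1) * (1 - ‖z j‖ ^ 2) ^ β / Real.pi)))

lemma aux_pow_zero (β : ℝ) (hβ : -1 < β) (d : ℝ) (hd : 0 < d) :
    ∫⁻ x, (Icc 0 d).indicator (fun x : ℝ => ENNReal.ofReal (x ^ β)) x =
      ENNReal.ofReal (d ^ (1 + β) / (β + 1)) := by
  rw [lintegral_indicator measurableSet_Icc, setLIntegral_congr Ioc_ae_eq_Icc.symm]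
  have hi : IntegrableOn (fun x : ℝ => x ^ β) (Ioc 0 d) := by
    have := intervalIntegral.intervalIntegrable_rpow' (a := 0) (b := d) hβ
    rwa [intervalIntegrable_iff_integrableOn_Ioc_of_le hd.le] at this
  rw [← ofReal_integral_eq_lintegral_ofReal hi]
  · rw [← intervalIntegral.integral_of_le hd.le, integral_rpow (Or.inl hβ),
      Real.zero_rpow (by linarith), sub_zero, add_comm 1 β]
  · filter_upwards [ae_restrict_mem measurableSet_Ioc] with x hx
    exact Real.rpow_nonneg hx.1.le _

lemma aux_one_dim (β : ℝ) (hβ : β ∈ Set.Ioc (-1:ℝ) 0) (a b d : ℝ) (hd : 0 < d) :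
    ∫⁻ x in Icc (a - d) (a + d), ENNReal.ofReal (|x - b| ^ β) ≤
      ENNReal.ofReal ((2 + 2 / (β + 1)) * d ^ (1 + β)) := by
  obtain ⟨h1, h0⟩ := hβ
  have hb : 0 < β + 1 := by linarith
  set f : ℝ → ℝ≥0∞ := (Icc 0 d).indicator (fun x : ℝ => ENNReal.ofReal (x ^ β)) with hf
  have hfm : Measurable f := by
    apply Measurable.indicator _ measurableSet_Icc
    fun_prop
  have hpt : ∀ x : ℝ, ENNReal.ofReal (|x - b| ^ β) ≤
      ENNReal.ofReal (d ^ β) + f (x - b) + f (b - x) := by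
    intro x
    by_cases hx : d ≤ |x - b|
    · have : |x - b| ^ β ≤ d ^ β := Real.rpow_le_rpow_of_nonpos hd hx h0
      calc _ ≤ ENNReal.ofReal (d ^ β) := ENNReal.ofReal_le_ofReal this
        _ ≤ _ := by rw [add_assoc]; exact le_self_add
    · push Not at hx
      rcases le_total 0 (x - b) with h | h
      · have : f (x - b) = ENNReal.ofReal (|x - b| ^ β) := by
          rw [abs_of_nonneg h] at hx ⊢
          rw [hf, indicator_of_mem (show x - b ∈ Icc 0 d from ⟨h, hx.le⟩)]
        rw [this, add_assoc, add_left_comm]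
        exact le_self_add
      · have : f (b - x) = ENNReal.ofReal (|x - b| ^ β) := by
          rw [abs_of_nonpos h, neg_sub] at hx ⊢
          rw [hf, indicator_of_mem (show b - x ∈ Icc 0 d from ⟨by linarith, hx.le⟩)]
        rw [this]
        exact le_add_self
  calc _ ≤ ∫⁻ x in Icc (a - d) (a + d), (ENNReal.ofReal (d ^ β) + f (x - b) + f (b - x)) :=
        lintegral_mono hpt
    _ = (∫⁻ x in Icc (a - d) (a + d), ENNReal.ofReal (d ^ β)) +
        (∫⁻ x in Icc (a - d) (a + d), f (x - b)) + ∫⁻ x in Icc (a - d) (a + d), f (b - x) := by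
        rw [lintegral_add_right _ (by fun_prop), lintegral_add_right _ (by fun_prop)]
    _ ≤ ENNReal.ofReal (2 * d ^ (1 + β)) + ENNReal.ofReal (d ^ (1 + β) / (β + 1)) +
        ENNReal.ofReal (d ^ (1 + β) / (β + 1)) := by
        gcongr
        · rw [setLIntegral_const, Real.volume_Icc, ← ENNReal.ofReal_mul (by positivity)]
          apply le_of_eq
          congr 1
          rw [Real.rpow_add hd, Real.rpow_one]
          ring
        · refine (setLIntegral_le_lintegral _ _).trans ?_
          rw [lintegral_sub_right_eq_self f b, aux_pow_zero β h1 d hd]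
        · refine (setLIntegral_le_lintegral _ _).trans ?_
          rw [lintegral_sub_left_eq_self f b, aux_pow_zero β h1 d hd]
    _ = _ := by
        rw [← ENNReal.ofReal_add (by positivity) (by positivity),
          ← ENNReal.ofReal_add (by positivity) (by positivity)]
        congr 1
        field_simp
        ring

lemma aux_two_dim (β : ℝ) (hβ : β ∈ Set.Ioc (-1:ℝ) 0) (h : ℝ → ℝ) (hm : Measurable h)
    (a b d : ℝ) (hd : 0 < d) :
    ∫⁻ y in Icc (b - d) (b + d), ∫⁻ x in Icc (a - d) (a + d), ENNReal.ofReal (|x - h y| ^ β) ≤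
      ENNReal.ofReal (2 * (2 + 2 / (β + 1)) * d ^ (2 + β)) := by
  have hb : 0 < β + 1 := by linarith [hβ.1]
  calc _ ≤ ∫⁻ y in Icc (b - d) (b + d), ENNReal.ofReal ((2 + 2 / (β + 1)) * d ^ (1 + β)) :=
        lintegral_mono fun y => aux_one_dim β hβ a (h y) d hd
    _ = _ := by
      rw [setLIntegral_const, Real.volume_Icc, ← ENNReal.ofReal_mul (by positivity)]
      congr 1
      have e : d ^ (2 + β) = d * d ^ (1 + β) := by
        rw [show 2 + β = 1 + (1 + β) by ring, Real.rpow_add hd 1, Real.rpow_one]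
      rw [e]
      ring

lemma aux_complex (G : ℝ × ℝ → ℝ≥0∞) (hG : Measurable G) (a : ℂ) (d : ℝ) :
    ∫⁻ z in closedBall a d, G (z.re, z.im) ≤
      ∫⁻ p in Icc (a.re - d) (a.re + d) ×ˢ Icc (a.im - d) (a.im + d), G p := by
  have e := Complex.volume_preserving_equiv_real_prod
  rw [← e.setLIntegral_comp_preimage (measurableSet_Icc.prod measurableSet_Icc) hG]
  refine lintegral_mono_set ?_
  intro z hz
  rw [mem_closedBall, Complex.dist_eq] at hz
  have h1 := (Complex.abs_re_le_norm (z - a)).trans hz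
  have h2 := (Complex.abs_im_le_norm (z - a)).trans hz
  rw [abs_le, Complex.sub_re] at h1
  rw [abs_le, Complex.sub_im] at h2
  change (z.re, z.im) ∈ Icc (a.re - d) (a.re + d) ×ˢ Icc (a.im - d) (a.im + d)
  refine ⟨⟨?_, ?_⟩, ⟨?_, ?_⟩⟩ <;> dsimp only <;> linarith

lemma aux_re (β : ℝ) (hβ : β ∈ Set.Ioc (-1:ℝ) 0) (h : ℝ → ℝ) (hm : Measurable h)
    (a : ℂ) (d : ℝ) (hd : 0 < d) :
    ∫⁻ z in closedBall a d, ENNReal.ofReal (|z.re - h z.im| ^ β) ≤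
      ENNReal.ofReal (2 * (2 + 2 / (β + 1)) * d ^ (2 + β)) := by
  have hG : Measurable (fun p : ℝ × ℝ => ENNReal.ofReal (|p.1 - h p.2| ^ β)) := by fun_prop
  refine (aux_complex _ hG a d).trans ?_
  rw [Measure.volume_eq_prod, ← Measure.prod_restrict, lintegral_prod_symm _ hG.aemeasurable]
  exact aux_two_dim β hβ h hm _ _ d hd

lemma aux_im (β : ℝ) (hβ : β ∈ Set.Ioc (-1:ℝ) 0) (h : ℝ → ℝ) (hm : Measurable h)
    (a : ℂ) (d : ℝ) (hd : 0 < d) :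
    ∫⁻ z in closedBall a d, ENNReal.ofReal (|z.im - h z.re| ^ β) ≤
      ENNReal.ofReal (2 * (2 + 2 / (β + 1)) * d ^ (2 + β)) := by
  have hG : Measurable (fun p : ℝ × ℝ => ENNReal.ofReal (|p.2 - h p.1| ^ β)) := by fun_prop
  refine (aux_complex _ hG a d).trans ?_
  rw [Measure.volume_eq_prod, ← Measure.prod_restrict, lintegral_prod _ hG.aemeasurable]
  exact aux_two_dim β hβ h hm _ _ d hd

lemma aux_pt (β : ℝ) (hβ : β ∈ Set.Ioc (-1:ℝ) 0) (x y : ℝ) (h : x ^ 2 + y ^ 2 < 1)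
    (hxy : |y| ≤ |x|) :
    (1 - (x ^ 2 + y ^ 2)) ^ β ≤
      2 * (|x - Real.sqrt (1 - y ^ 2)| ^ β + |x - - Real.sqrt (1 - y ^ 2)| ^ β) := by
  obtain ⟨h1, h0⟩ := hβ
  have hy2 : y ^ 2 ≤ x ^ 2 := sq_le_sq.mpr hxy
  set q := Real.sqrt (1 - y ^ 2) with hq
  have hq2 : q ^ 2 = 1 - y ^ 2 := Real.sq_sqrt (by nlinarith)
  have hq0 : 0 ≤ q := Real.sqrt_nonneg _
  have hqh : 1 / 2 ≤ q := by nlinarith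
  have hqx : |x| < q := abs_lt_of_sq_lt_sq (by nlinarith) hq0
  have key : (1 - (x ^ 2 + y ^ 2)) ^ β ≤ 2 * (q - |x|) ^ β := by
    have e : 1 - (x ^ 2 + y ^ 2) = (q - |x|) * (q + |x|) := by
      have := sq_abs x
      nlinarith
    have hle : (q - |x|) / 2 ≤ 1 - (x ^ 2 + y ^ 2) := by
      rw [e]
      have := abs_nonneg x
      nlinarith
    have hp : 0 < q - |x| := by linarith
    calc _ ≤ ((q - |x|) / 2) ^ β := Real.rpow_le_rpow_of_nonpos (by linarith) hle h0
      _ = (1 / 2) ^ β * (q - |x|) ^ β := by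
        rw [← Real.mul_rpow (by norm_num) hp.le]; congr 1; ring
      _ ≤ 2 * (q - |x|) ^ β := by
        gcongr
        calc ((1:ℝ) / 2) ^ β ≤ (1 / 2) ^ (-1 : ℝ) :=
              Real.rpow_le_rpow_of_exponent_ge (by norm_num) (by norm_num) h1.le
          _ = 2 := by rw [Real.rpow_neg_one]; norm_num
  refine key.trans ?_
  have p1 : 0 ≤ |x - q| ^ β := by positivity
  have p2 : 0 ≤ |x - -q| ^ β := by positivity
  rcases le_total 0 x with hx | hx
  · rw [abs_of_nonneg hx] at hqx ⊢
    rw [show q - x = |x - q| by rw [abs_of_neg (by linarith)]; ring]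
    linarith
  · rw [abs_of_nonpos hx] at hqx ⊢
    rw [show q - -x = |x - -q| by rw [abs_of_pos (by linarith)]; ring]
    linarith

/-- The one-variable weight. -/
def wt (β : ℝ) : ℂ → ℝ≥0∞ := (ball (0:ℂ) 1).indicator
  (fun z => ENNReal.ofReal ((β + 1) * (1 - ‖z‖ ^ 2) ^ β / Real.pi))

lemma wt_measurable (β : ℝ) : Measurable (wt β) := by
  apply Measurable.indicator _ measurableSet_ball
  fun_prop

lemma wt_bound (β : ℝ) (hβ : β ∈ Set.Ioc (-1:ℝ) 0) :
    ∃ C > (0:ℝ), ∀ (a : ℂ) (d : ℝ), 0 < d →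
      ∫⁻ z in closedBall a d, wt β z ≤ ENNReal.ofReal (C * d ^ (2 + β)) := by
  have hb : 0 < β + 1 := by linarith [hβ.1]
  have hb1 : β + 1 ≤ 1 := by linarith [hβ.2]
  set q : ℝ → ℝ := fun y => Real.sqrt (1 - y ^ 2) with hq
  have hqm : Measurable q := by fun_prop
  set B := 2 * (2 + 2 / (β + 1)) with hB
  have hBp : 0 < B := by positivity
  refine ⟨2 * (B + B + (B + B)), by positivity, fun a d hd => ?_⟩
  have hpt : ∀ z : ℂ, wt β z ≤ ENNReal.ofReal 2 *
      ((ENNReal.ofReal (|z.re - q z.im| ^ β) + ENNReal.ofReal (|z.re - (fun y => - q y) z.im| ^ β)) +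
      (ENNReal.ofReal (|z.im - q z.re| ^ β) +
        ENNReal.ofReal (|z.im - (fun y => - q y) z.re| ^ β))) := by
    intro z
    by_cases hz : z ∈ ball (0:ℂ) 1
    · rw [wt, indicator_of_mem hz]
      rw [mem_ball_zero_iff] at hz
      have hn : ‖z‖ ^ 2 = z.re ^ 2 + z.im ^ 2 := by
        rw [Complex.sq_norm, Complex.normSq_apply]; ring
      have hz2 : z.re ^ 2 + z.im ^ 2 < 1 := by
        rw [← hn]; nlinarith [norm_nonneg z]
      rw [← ENNReal.ofReal_add (by positivity) (by positivity),
        ← ENNReal.ofReal_add (by positivity) (by positivity),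
        ← ENNReal.ofReal_add (by positivity) (by positivity),
        ← ENNReal.ofReal_mul (by norm_num)]
      apply ENNReal.ofReal_le_ofReal
      have hpos : 0 ≤ (1 - ‖z‖ ^ 2) ^ β := Real.rpow_nonneg (by rw [hn]; linarith) _
      have hle : (β + 1) * (1 - ‖z‖ ^ 2) ^ β / Real.pi ≤ (1 - ‖z‖ ^ 2) ^ β := by
        rw [div_le_iff₀ Real.pi_pos]
        have := Real.pi_gt_three
        nlinarith
      refine hle.trans ?_
      rw [hn]
      have p1 : 0 ≤ |z.re - q z.im| ^ β + |z.re - - q z.im| ^ β := by positivity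
      have p2 : 0 ≤ |z.im - q z.re| ^ β + |z.im - - q z.re| ^ β := by positivity
      rcases le_total |z.im| |z.re| with h | h
      · have := aux_pt β hβ z.re z.im hz2 h
        simp only [hq] at *
        linarith
      · have := aux_pt β hβ z.im z.re (by linarith) h
        rw [add_comm (z.re ^ 2)]
        simp only [hq] at *
        linarith
    · rw [wt, indicator_of_notMem hz]
      exact zero_le
  calc _ ≤ _ := lintegral_mono hpt
    _ = ENNReal.ofReal 2 *
      (((∫⁻ z in closedBall a d, ENNReal.ofReal (|z.re - q z.im| ^ β)) +
        ∫⁻ z in closedBall a d, ENNReal.ofReal (|z.re - (fun y => - q y) z.im| ^ β)) +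
      ((∫⁻ z in closedBall a d, ENNReal.ofReal (|z.im - q z.re| ^ β)) +
        ∫⁻ z in closedBall a d, ENNReal.ofReal (|z.im - (fun y => - q y) z.re| ^ β))) := by
      rw [lintegral_const_mul _ (by fun_prop), lintegral_add_right _ (by fun_prop),
        lintegral_add_right _ (by fun_prop), lintegral_add_right _ (by fun_prop)]
    _ ≤ ENNReal.ofReal 2 * ((ENNReal.ofReal (B * d ^ (2 + β)) + ENNReal.ofReal (B * d ^ (2 + β))) +
      (ENNReal.ofReal (B * d ^ (2 + β)) + ENNReal.ofReal (B * d ^ (2 + β)))) := by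
      gcongr
      · exact aux_re β hβ q hqm a d hd
      · exact aux_re β hβ _ hqm.neg a d hd
      · exact aux_im β hβ q hqm a d hd
      · exact aux_im β hβ _ hqm.neg a d hd
    _ = _ := by
      rw [← ENNReal.ofReal_add (by positivity) (by positivity),
        ← ENNReal.ofReal_add (by positivity) (by positivity),
        ← ENNReal.ofReal_mul (by norm_num)]
      congr 1
      ring

/-- Rows `S`, columns `T`: the block of `M` is injective. -/
def Blk {k : ℕ} (M : Matrix (Fin k) (Fin k) ℂ) (S T : Finset (Fin k)) : Prop :=
  ∀ w : Fin k → ℂ, (∀ j ∉ T, w j = 0) → (∀ i ∈ S, M.mulVec w i = 0) → w = 0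

lemma Blk.step {k : ℕ} {M : Matrix (Fin k) (Fin k) ℂ} {S T : Finset (Fin k)} (h : Blk M S T)
    (s : Fin k) (hT : T.Nonempty) : ∃ t ∈ T, Blk M (S.erase s) (T.erase t) := by
  by_cases hk : ∃ w : Fin k → ℂ, (∀ j ∉ T, w j = 0) ∧ (∀ i ∈ S.erase s, M.mulVec w i = 0) ∧ w ≠ 0
  · obtain ⟨w, hw1, hw2, hw3⟩ := hk
    obtain ⟨t, ht⟩ : ∃ t, w t ≠ 0 := by
      by_contra hc
      push Not at hc
      exact hw3 (funext hc)
    have htT : t ∈ T := by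
      by_contra hc
      exact ht (hw1 t hc)
    have hs : M.mulVec w s ≠ 0 := by
      intro hc
      refine hw3 (h w hw1 fun i hi => ?_)
      by_cases his : i = s
      · rw [his, hc]
      · exact hw2 i (Finset.mem_erase.mpr ⟨his, hi⟩)
    refine ⟨t, htT, fun v hv1 hv2 => ?_⟩
    set c := M.mulVec v s / M.mulVec w s with hc
    have hz : v - c • w = 0 := by
      refine h _ (fun j hj => ?_) (fun i hi => ?_)
      · have : v j = 0 := hv1 j (fun hh => hj (Finset.mem_of_mem_erase hh))
        simp [this, hw1 j hj]
      · rw [Matrix.mulVec_sub, Matrix.mulVec_smul]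
        by_cases his : i = s
        · subst his
          simp [hc, hs]
        · have hi' := Finset.mem_erase.mpr ⟨his, hi⟩
          simp [hv2 i hi', hw2 i hi']
    have ht0 : v t = 0 := hv1 t (by simp)
    have hc0 : c = 0 := by
      have := congrFun hz t
      simp [ht0, ht] at this
      exact this
    simpa [hc0] using hz
  · push Not at hk
    obtain ⟨t, ht⟩ := hT
    exact ⟨t, ht, fun w hw1 hw2 => hk w (fun j hj => hw1 j fun hh =>
      hj (Finset.mem_of_mem_erase hh)) hw2⟩

lemma Blk.quant1 {k : ℕ} {M : Matrix (Fin k) (Fin k) ℂ} {S T : Finset (Fin k)} (h : Blk M S T) :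
    ∃ κ > (0:ℝ), ∀ w : Fin k → ℂ, (∀ j ∉ T, w j = 0) → ∀ d : ℝ, 0 ≤ d →
      (∀ i ∈ S, ‖M.mulVec w i‖ ≤ d) → ‖w‖ ≤ κ * d := by
  let W : Submodule ℂ (Fin k → ℂ) :=
    { carrier := {w | ∀ j ∉ T, w j = 0}
      add_mem' := by
        intro a b ha hb j hj
        simp [ha j hj, hb j hj]
      zero_mem' := by simp
      smul_mem' := by
        intro c a ha j hj
        simp [ha j hj] }
  let L : W →ₗ[ℂ] (S → ℂ) :=
    { toFun := fun w i => M.mulVec w.1 i.1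
      map_add' := by
        intro a b
        funext i
        simp [Matrix.mulVec_add]
      map_smul' := by
        intro a b
        funext i
        simp [Matrix.mulVec_smul] }
  have hL : LinearMap.ker L = ⊥ := by
    rw [LinearMap.ker_eq_bot']
    intro w hw
    apply Subtype.ext
    exact h w.1 w.2 fun i hi => congrFun hw ⟨i, hi⟩
  obtain ⟨K, hK, hA⟩ := LinearMap.exists_antilipschitzWith L hL
  refine ⟨K, by exact_mod_cast hK, fun w hw d hd hi => ?_⟩
  have h1 := hA.le_mul_dist ⟨w, hw⟩ 0
  rw [map_zero, dist_zero_right, dist_zero_right] at h1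
  refine h1.trans ?_
  gcongr
  rw [pi_norm_le_iff_of_nonneg hd]
  exact fun i => hi i.1 i.2

lemma Blk.quant {k : ℕ} (M : Matrix (Fin k) (Fin k) ℂ) :
    ∃ κ > (0:ℝ), ∀ S T, Blk M S T → ∀ w : Fin k → ℂ, (∀ j ∉ T, w j = 0) → ∀ d : ℝ, 0 ≤ d →
      (∀ i ∈ S, ‖M.mulVec w i‖ ≤ d) → ‖w‖ ≤ κ * d := by
  have : ∀ p : Finset (Fin k) × Finset (Fin k), ∃ κ > (0:ℝ), Blk M p.1 p.2 →
      ∀ w : Fin k → ℂ, (∀ j ∉ p.2, w j = 0) → ∀ d : ℝ, 0 ≤ d →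
      (∀ i ∈ p.1, ‖M.mulVec w i‖ ≤ d) → ‖w‖ ≤ κ * d := by
    intro p
    by_cases h : Blk M p.1 p.2
    · obtain ⟨κ, h1, h2⟩ := h.quant1
      exact ⟨κ, h1, fun _ => h2⟩
    · exact ⟨1, one_pos, fun h' => absurd h' h⟩
  choose κ h1 h2 using this
  refine ⟨∑ p, κ p, Finset.sum_pos (fun p _ => h1 p) ⟨(∅, ∅), Finset.mem_univ _⟩, ?_⟩
  intro S T hST w hw d hd hi
  refine (h2 (S, T) hST w hw d hd hi).trans ?_
  gcongr
  exact Finset.single_le_sum (f := κ) (fun p _ => (h1 p).le) (Finset.mem_univ _)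

lemma main_induction {k : ℕ} (M : Matrix (Fin k) (Fin k) ℂ) (w : ℂ → ℝ≥0∞) (hw : Measurable w)
    (β C K : ℝ) (hK : 0 < K)
    (hwb : ∀ (a : ℂ) (d : ℝ), 0 < d →
      ∫⁻ z in closedBall a d, w z ≤ ENNReal.ofReal (C * d ^ (2 + β)))
    (E : Set (Fin k → ℂ)) (hEm : MeasurableSet E) (δ : Fin k → ℝ) (hδ : ∀ i, 0 < δ i)
    (hE : ∀ S T, Blk M S T → ∀ z ∈ E, ∀ z' ∈ E, (∀ j ∉ T, z j = z' j) →
      ∀ d : ℝ, 0 ≤ d → (∀ i ∈ S, δ i ≤ d) → ‖z - z'‖ ≤ K * d) :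
    ∀ (n : ℕ) (S T : Finset (Fin k)), S.card = n → T.card = n → Blk M S T → ∀ x : Fin k → ℂ,
      lmarginal (fun _ => (volume : Measure ℂ)) T
        (fun z => E.indicator 1 z * ∏ j ∈ T, w (z j)) x ≤
      ∏ i ∈ S, ENNReal.ofReal (C * (K * δ i) ^ (2 + β)) := by
  intro n
  induction n with
  | zero =>
    intro S T hS hT _ x
    rw [Finset.card_eq_zero] at hS hT
    subst hS hT
    simp only [lmarginal_empty, Finset.prod_empty, mul_one]
    exact indicator_le (fun _ _ => le_rfl) x |>.trans (by simp)
  | succ n ih =>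
    intro S T hS hT hB x
    have hSn : S.Nonempty := Finset.card_pos.mp (by omega)
    have hTn : T.Nonempty := Finset.card_pos.mp (by omega)
    obtain ⟨s, hsS, hmax⟩ := S.exists_max_image δ hSn
    obtain ⟨t, htT, hB'⟩ := hB.step s hTn
    set T' := T.erase t with hT'
    have ht' : t ∉ T' := by simp [hT']
    have hTi : T = insert t T' := (Finset.insert_erase htT).symm
    have hih := ih (S.erase s) T' (by rw [Finset.card_erase_of_mem hsS]; omega)
      (by rw [hT', Finset.card_erase_of_mem htT]; omega) hB'
    set P := ∏ i ∈ S.erase s, ENNReal.ofReal (C * (K * δ i) ^ (2 + β)) with hP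
    have hF : ∀ U : Finset (Fin k), Measurable
        (fun z : Fin k → ℂ => E.indicator (1 : (Fin k → ℂ) → ℝ≥0∞) z * ∏ j ∈ U, w (z j)) := by
      intro U
      refine (measurable_one.indicator hEm).mul ?_
      exact Finset.measurable_prod _ fun j _ => hw.comp (measurable_pi_apply j)
    have hmarg : lmarginal (fun _ => (volume : Measure ℂ)) T
        (fun z => E.indicator 1 z * ∏ j ∈ T, w (z j)) x =
        ∫⁻ ξ, w ξ * lmarginal (fun _ => (volume : Measure ℂ)) T'
          (fun z => E.indicator 1 z * ∏ j ∈ T', w (z j)) (Function.update x t ξ) := by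
      have : lmarginal (fun _ => (volume : Measure ℂ)) T
        (fun z => E.indicator 1 z * ∏ j ∈ T, w (z j)) x =
        lmarginal (fun _ => (volume : Measure ℂ)) (insert t T')
        (fun z => E.indicator 1 z * ∏ j ∈ T, w (z j)) x := by rw [← hTi]
      rw [this, lmarginal_insert _ (hF T) ht']
      refine lintegral_congr fun ξ => ?_
      rw [lmarginal, lmarginal, ← lintegral_const_mul]
      · refine lintegral_congr fun y => ?_
        rw [hTi, Finset.prod_insert ht']
        have : Function.updateFinset (Function.update x t ξ) T' y t = ξ := by
          simp [Function.updateFinset, ht']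
        rw [this]
        ring
      · exact (hF T').comp measurable_updateFinset
    rw [hmarg, ← Finset.mul_prod_erase S _ hsS, ← hP]
    set D : Set ℂ := {ξ | ∃ y, Function.updateFinset (Function.update x t ξ) T' y ∈ E} with hD
    have hzero : ∀ ξ ∉ D, lmarginal (fun _ => (volume : Measure ℂ)) T'
          (fun z => E.indicator 1 z * ∏ j ∈ T', w (z j)) (Function.update x t ξ) = 0 := by
      intro ξ hξ
      rw [lmarginal]
      have : ∀ y, Function.updateFinset (Function.update x t ξ) T' y ∉ E := by
        intro y hy
        exact hξ ⟨y, hy⟩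
      simp [this]
    have hdiam : ∀ ξ ∈ D, ∀ ξ' ∈ D, dist ξ ξ' ≤ K * δ s := by
      rintro ξ ⟨y, hy⟩ ξ' ⟨y', hy'⟩
      have h1 := hE S T hB _ hy _ hy' (by
        intro j hj
        have hj' : j ∉ T' := fun h => hj (Finset.mem_of_mem_erase h)
        have hjt : j ≠ t := by rintro rfl; exact hj htT
        simp [Function.updateFinset, hj', hjt]) (δ s) (hδ s).le hmax
      have h2 := (norm_le_pi_norm _ t).trans h1
      simpa [Function.updateFinset, ht', dist_eq_norm] using h2
    rcases D.eq_empty_or_nonempty with hDe | ⟨a, ha⟩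
    · have : ∀ ξ, lmarginal (fun _ => (volume : Measure ℂ)) T'
          (fun z => E.indicator 1 z * ∏ j ∈ T', w (z j)) (Function.update x t ξ) = 0 :=
        fun ξ => hzero ξ (by simp [hDe])
      simp only [this, mul_zero, lintegral_zero]
      exact zero_le
    · calc _ ≤ ∫⁻ ξ, (closedBall a (K * δ s)).indicator (fun ξ => w ξ * P) ξ := by
            refine lintegral_mono fun ξ => ?_
            by_cases hξ : ξ ∈ D
            · rw [indicator_of_mem (show ξ ∈ closedBall a (K * δ s) from hdiam ξ hξ a ha)]
              gcongr
              exact hih _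
            · simp only [hzero ξ hξ, mul_zero]
              exact zero_le
        _ = (∫⁻ ξ in closedBall a (K * δ s), w ξ) * P := by
            rw [lintegral_indicator measurableSet_closedBall, lintegral_mul_const _ hw]
        _ ≤ _ := by
            gcongr
            exact hwb a _ (mul_pos hK (hδ s))

lemma polydisc_eq (k : ℕ) : polydisc k = ball 0 1 := by
  ext z
  simp [polydisc, pi_norm_lt_iff]

lemma closedPolydisc_eq (k : ℕ) : closedPolydisc k = closedBall 0 1 := by
  ext z
  simp [closedPolydisc, pi_norm_le_iff_of_nonneg]

lemma closedPolydisc_uniqueDiff (k : ℕ) : UniqueDiffOn ℝ (closedPolydisc k) := by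
  rw [closedPolydisc_eq]
  apply uniqueDiffOn_convex (convex_closedBall 0 1)
  exact ⟨0, ball_subset_interior_closedBall (by simp)⟩

lemma fderivWithin_mulVec (k : ℕ) (ψ : (Fin k → ℂ) → (Fin k → ℂ))
    (hhol : DifferentiableOn ℂ ψ (polydisc k))
    (hsm : ContDiffOn ℝ 1 ψ (closedPolydisc k)) (z : Fin k → ℂ) (hz : z ∈ closedPolydisc k)
    (w : Fin k → ℂ) :
    fderivWithin ℝ ψ (closedPolydisc k) z w = (Matrix.of fun i j =>
        fderivWithin ℝ ψ (closedPolydisc k) z (Pi.single j 1) i).mulVec w := by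
  have hcont := hsm.continuousOn_fderivWithin (closedPolydisc_uniqueDiff k) le_rfl
  have hsmul : ∀ (c : ℂ) (v : Fin k → ℂ),
      fderivWithin ℝ ψ (closedPolydisc k) z (c • v) =
        c • fderivWithin ℝ ψ (closedPolydisc k) z v := by
    intro c v
    have : EqOn (fun z => fderivWithin ℝ ψ (closedPolydisc k) z (c • v))
        (fun z => c • fderivWithin ℝ ψ (closedPolydisc k) z v) (polydisc k) := by
      intro y hy
      have hn : closedPolydisc k ∈ nhds y := by
        rw [closedPolydisc_eq]
        rw [polydisc_eq] at hy
        exact Filter.mem_of_superset (isOpen_ball.mem_nhds hy) ball_subset_closedBall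
      have hd : DifferentiableAt ℂ ψ y := by
        refine (hhol y hy).differentiableAt ?_
        rw [polydisc_eq] at hy ⊢
        exact isOpen_ball.mem_nhds hy
      dsimp only
      rw [fderivWithin_of_mem_nhds hn, hd.fderiv_restrictScalars ℝ]
      simp
    refine (this.of_subset_closure (hcont.clm_apply continuousOn_const)
      ((hcont.clm_apply continuousOn_const).const_smul c) ?_ ?_) hz
    · rw [closedPolydisc_eq, polydisc_eq]
      exact ball_subset_closedBall
    · rw [closedPolydisc_eq, polydisc_eq, closure_ball _ one_ne_zero]
  have hw : w = ∑ j, w j • (Pi.single j 1 : Fin k → ℂ) := by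
    funext i
    simp [Finset.sum_apply, Pi.single_apply]
  conv_lhs => rw [hw, map_sum]
  funext i
  simp only [hsmul, Finset.sum_apply, Pi.smul_apply, smul_eq_mul, Matrix.mulVec, dotProduct,
    Matrix.of_apply]
  exact Finset.sum_congr rfl fun j _ => mul_comm _ _

lemma local_bound (k : ℕ) (ψ : (Fin k → ℂ) → (Fin k → ℂ))
    (hhol : DifferentiableOn ℂ ψ (polydisc k))
    (hsm : ContDiffOn ℝ 1 ψ (closedPolydisc k)) (β : ℝ) (hβ : β ∈ Set.Ioc (-1:ℝ) 0)
    (z₀ : Fin k → ℂ) (hz : z₀ ∈ closedPolydisc k)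
    (hnd : Matrix.det (Matrix.of fun i j =>
        fderivWithin ℝ ψ (closedPolydisc k) z₀ (Pi.single j 1) i) ≠ 0) :
    ∃ r > (0:ℝ), ∃ c > (0:ℝ), ∀ δ : Fin k → ℝ, (∀ i, 0 < δ i) →
      Vbeta k β {z | z ∈ ball z₀ r ∩ polydisc k ∧ ∀ i, ‖ψ z i‖ < δ i} ≤
        ENNReal.ofReal (c * ∏ i, δ i ^ (2 + β)) := by
  have hb : 0 < β + 1 := by linarith [hβ.1]
  set M := (Matrix.of fun i j => fderivWithin ℝ ψ (closedPolydisc k) z₀ (Pi.single j 1) i) with hM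
  have hA := fderivWithin_mulVec k ψ hhol hsm z₀ hz
  rw [← hM] at hA
  obtain ⟨κ, hκ, hq⟩ := Blk.quant M
  obtain ⟨C, hC, hwb⟩ := wt_bound β hβ
  have hcont := hsm.continuousOn_fderivWithin (closedPolydisc_uniqueDiff k) le_rfl
  obtain ⟨r, hr, hrb⟩ := Metric.continuousWithinAt_iff.mp (hcont z₀ hz) (1 / (2 * κ)) (by positivity)
  -- strict approximation
  have happ : ∀ z ∈ ball z₀ r ∩ closedPolydisc k, ∀ z' ∈ ball z₀ r ∩ closedPolydisc k,
      ‖ψ z - ψ z' - M.mulVec (z - z')‖ ≤ 1 / (2 * κ) * ‖z - z'‖ := by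
    intro z hz z' hz'
    rw [← hA]
    refine Convex.norm_image_sub_le_of_norm_hasFDerivWithin_le'
      (s := ball z₀ r ∩ closedPolydisc k)
      (f' := fun y => fderivWithin ℝ ψ (closedPolydisc k) y) (𝕜 := ℝ) ?_ ?_ ?_ hz' hz
    · intro y hy
      exact ((hsm.differentiableOn one_ne_zero y hy.2).hasFDerivWithinAt).mono inter_subset_right
    · intro y hy
      have := hrb hy.2 hy.1
      rw [dist_eq_norm] at this
      exact this.le
    · rw [closedPolydisc_eq]
      exact (convex_ball _ _).inter (convex_closedBall _ _)
  have hsub : polydisc k ⊆ closedPolydisc k := fun z hz j => (hz j).le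
  refine ⟨r, hr, C ^ k * ((4 * κ) ^ (2 + β)) ^ k, by positivity, fun δ hδ => ?_⟩
  set E : Set (Fin k → ℂ) := {z | z ∈ ball z₀ r ∩ polydisc k ∧ ∀ i, ‖ψ z i‖ < δ i} with hEdef
  have hEo : IsOpen E := by
    have h1 : IsOpen (ball z₀ r ∩ polydisc k) := by
      rw [polydisc_eq]; exact isOpen_ball.inter isOpen_ball
    have h2 : ContinuousOn ψ (ball z₀ r ∩ polydisc k) :=
      hsm.continuousOn.mono (inter_subset_right.trans hsub)
    have h3 : IsOpen {u : Fin k → ℂ | ∀ i, ‖u i‖ < δ i} := by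
      have : {u : Fin k → ℂ | ∀ i, ‖u i‖ < δ i} = ⋂ i, {u | ‖u i‖ < δ i} := by
        ext; simp
      rw [this]
      exact isOpen_iInter_of_finite fun i => isOpen_lt (by fun_prop) continuous_const
    exact h2.isOpen_inter_preimage h1 h3
  have hE : ∀ S T, Blk M S T → ∀ z ∈ E, ∀ z' ∈ E, (∀ j ∉ T, z j = z' j) →
      ∀ d : ℝ, 0 ≤ d → (∀ i ∈ S, δ i ≤ d) → ‖z - z'‖ ≤ (4 * κ) * d := by
    intro S T hB z hz z' hz' hT d hd hS
    have h1 := happ z ⟨hz.1.1, hsub hz.1.2⟩ z' ⟨hz'.1.1, hsub hz'.1.2⟩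
    have h2 := hq S T hB (z - z') (fun j hj => by simp [hT j hj])
      (2 * d + 1 / (2 * κ) * ‖z - z'‖) (by positivity) (by
        intro i hi
        have h3 := (norm_le_pi_norm (ψ z - ψ z' - M.mulVec (z - z')) i).trans h1
        have h4 : M.mulVec (z - z') i = ψ z i - ψ z' i -
          (ψ z - ψ z' - M.mulVec (z - z')) i := by simp
        rw [h4]
        have h5 := hz.2 i
        have h6 := hz'.2 i
        have h7 := hS i hi
        have h8 := norm_sub_le (ψ z i - ψ z' i) ((ψ z - ψ z' - M.mulVec (z - z')) i)
        have h9 := norm_sub_le (ψ z i) (ψ z' i)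
        linarith)
    have h3 : κ * (2 * d + 1 / (2 * κ) * ‖z - z'‖) = 2 * κ * d + ‖z - z'‖ / 2 := by
      field_simp
    rw [h3] at h2
    linarith
  have huniv : Blk M Finset.univ Finset.univ := by
    intro w _ hw
    exact Matrix.eq_zero_of_mulVec_eq_zero hnd (funext fun i => hw i (Finset.mem_univ i))
  have main := main_induction M (wt β) (wt_measurable β) β C (4 * κ) (by positivity) hwb E
    hEo.measurableSet δ hδ hE k Finset.univ Finset.univ (by simp) (by simp) huniv 0
  rw [← lintegral_eq_lmarginal_univ, ← volume_pi] at main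
  have hfin : ∏ i, ENNReal.ofReal (C * (4 * κ * δ i) ^ (2 + β)) =
      ENNReal.ofReal (C ^ k * ((4 * κ) ^ (2 + β)) ^ k * ∏ i, δ i ^ (2 + β)) := by
    rw [← ENNReal.ofReal_prod_of_nonneg]
    · congr 1
      have : ∀ i, C * (4 * κ * δ i) ^ (2 + β) = (C * (4 * κ) ^ (2 + β)) * δ i ^ (2 + β) := by
        intro i
        rw [Real.mul_rpow (by positivity) (hδ i).le]
        ring
      simp only [this, Finset.prod_mul_distrib, Finset.prod_const, Finset.card_univ,
        Fintype.card_fin]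
    · intro i _
      have := hδ i
      positivity
  rw [hfin] at main
  refine le_trans (le_of_eq ?_) main
  rw [Vbeta, withDensity_apply _ hEo.measurableSet, Measure.restrict_restrict hEo.measurableSet,
    inter_eq_left.mpr (fun z hz => hz.1.2 : E ⊆ polydisc k),
    ← lintegral_indicator hEo.measurableSet]
  refine lintegral_congr fun z => ?_
  by_cases hzE : z ∈ E
  · rw [indicator_of_mem hzE, indicator_of_mem hzE, Pi.one_apply, one_mul,
      ENNReal.ofReal_prod_of_nonneg]
    · refine Finset.prod_congr rfl fun j _ => ?_
      rw [wt, indicator_of_mem]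
      rw [mem_ball_zero_iff]
      exact hzE.1.2 j
    · intro j _
      have h1 : ‖z j‖ < 1 := hzE.1.2 j
      have h2 : 0 ≤ (1 - ‖z j‖ ^ 2) ^ β :=
        Real.rpow_nonneg (by nlinarith [norm_nonneg (z j)]) _
      have := Real.pi_pos
      positivity
  · rw [indicator_of_notMem hzE, indicator_of_notMem hzE, zero_mul]

theorem nondegenerate_sublevel_volume_bound (k : ℕ) (ψ : (Fin k → ℂ) → (Fin k → ℂ))
    (hhol : DifferentiableOn ℂ ψ (polydisc k))
    (hsm : ContDiffOn ℝ 1 ψ (closedPolydisc k))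
    (V : Set (Fin k → ℂ)) (hVopen : IsOpen V) (hVconn : IsConnected V)
    (hnd : ∀ z ∈ closure V ∩ closedPolydisc k,
      Matrix.det (Matrix.of fun i j =>
        fderivWithin ℝ ψ (closedPolydisc k) z (Pi.single j 1) i) ≠ 0)
    (β : ℝ) (hβ : β ∈ Set.Ioc (-1:ℝ) 0) :
    ∃ c > (0:ℝ), ∀ δ : Fin k → ℝ, (∀ i, 0 < δ i) →
      Vbeta k β {z | z ∈ closure V ∩ closedPolydisc k ∧ ∀ i, ‖ψ z i‖ < δ i} ≤
        ENNReal.ofReal (c * ∏ i, δ i ^ (2 + β)) := by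
  have hcpt : IsCompact (closure V ∩ closedPolydisc k) := by
    rw [closedPolydisc_eq]
    exact (isCompact_closedBall 0 1).inter_left isClosed_closure
  have hpm : MeasurableSet (polydisc k) := by
    rw [polydisc_eq]; exact measurableSet_ball
  have hnull : Vbeta k β (polydisc k)ᶜ = 0 := by
    rw [Vbeta]
    apply withDensity_absolutelyContinuous
    rw [Measure.restrict_apply hpm.compl]
    simp
  refine hcpt.induction_on (p := fun s => ∃ c > (0:ℝ), ∀ δ : Fin k → ℝ, (∀ i, 0 < δ i) →
      Vbeta k β {z | z ∈ s ∧ ∀ i, ‖ψ z i‖ < δ i} ≤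
        ENNReal.ofReal (c * ∏ i, δ i ^ (2 + β))) ?_ ?_ ?_ ?_
  · exact ⟨1, one_pos, fun δ _ => by simp⟩
  · rintro s t hst ⟨c, hc, h⟩
    exact ⟨c, hc, fun δ hδ => (measure_mono (show {z | z ∈ s ∧ ∀ i, ‖ψ z i‖ < δ i} ⊆
      {z | z ∈ t ∧ ∀ i, ‖ψ z i‖ < δ i} from fun z hz => ⟨hst hz.1, hz.2⟩)).trans (h δ hδ)⟩
  · rintro s t ⟨c, hc, h⟩ ⟨c', hc', h'⟩
    refine ⟨c + c', by positivity, fun δ hδ => ?_⟩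
    have hp : 0 ≤ ∏ i, δ i ^ (2 + β) :=
      Finset.prod_nonneg fun i _ => Real.rpow_nonneg (hδ i).le _
    rw [add_mul, ENNReal.ofReal_add (by positivity) (by positivity)]
    refine le_trans ?_ ((measure_union_le _ _).trans (add_le_add (h δ hδ) (h' δ hδ)))
    refine measure_mono ?_
    rintro z ⟨hz | hz, hz2⟩
    · exact Or.inl ⟨hz, hz2⟩
    · exact Or.inr ⟨hz, hz2⟩
  · intro z₀ hz₀
    obtain ⟨r, hr, c, hc, h⟩ := local_bound k ψ hhol hsm β hβ z₀ hz₀.2 (hnd z₀ hz₀)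
    refine ⟨ball z₀ r, mem_nhdsWithin_of_mem_nhds (ball_mem_nhds _ hr), c, hc, fun δ hδ => ?_⟩
    refine le_trans ?_ (h δ hδ)
    calc _ ≤ Vbeta k β ({z | z ∈ ball z₀ r ∩ polydisc k ∧ ∀ i, ‖ψ z i‖ < δ i} ∪ (polydisc k)ᶜ) := by
          refine measure_mono ?_
          rintro z ⟨hz1, hz2⟩
          by_cases hz3 : z ∈ polydisc k
          · exact Or.inl ⟨⟨hz1, hz3⟩, hz2⟩
          · exact Or.inr hz3
      _ ≤ _ := (measure_union_le _ _).trans (by rw [hnull, add_zero])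

end
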